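/- Let Z₁, …, Zₙ be nonempty finite types, let p be a strictly positive probability mass function on the product ∏ᵢ Zᵢ, fix an index i, and fix strictly positive probability mass functions q_j on Z_j for each j ≠ i. Define the free energy of a strictly positive pmf q_i on Z_i by F(q_i) = Σ_{z ∈ ∏ⱼ Zⱼ} (∏ⱼ q̃ⱼ(zⱼ)) · log((∏ⱼ q̃ⱼ(zⱼ)) / p(z)), where q̃ⱼ = qⱼ for j ≠ i and q̃ᵢ = qᵢ. Then F attains a unique minimizer among strictly positive pmfs on Zᵢ, given by qᵢ*(zᵢ) = exp(m(zᵢ)) / (Σ_{z'ᵢ ∈ Zᵢ} exp(m(z'ᵢ))), where m(zᵢ) = Σ_{z_{-i}} (∏_{j ≠ i} qⱼ(zⱼ)) · log p(z₁,…,zᵢ,…,zₙ) is the expectation of log p over the fixed factors with the i-th coordinate set to zᵢ. Equivalently, log qᵢ*(zᵢ) = c + m(zᵢ) for a constant c independent of zᵢ. -/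

import Mathlib

/-! Write `G z = ∏_{j ≠ i} q j (z j)`. Since `∏ j, q̃ j (z j) = r (z i) * G z`, splitting the logarithm
and summing over the fibres of `z ↦ z i` gives
`F r = ∑ a, r a * (log (r a) + H - m a)`, where `H`, the sum of `G * log G` over a fibre, does not
depend on the fibre (`sum_fiber_eq`), and the total mass of `G` on each fibre is `1`
(`sum_fiber_prod_eq_one`). As `log (qstar a) = m a - log ∑ exp m`, this says that
`F r` is the Kullback–Leibler divergence of `r` from `qstar` plus a constant, so the theorem is
Gibbs' inequality with its equality case (`gibbs_nonneg`, `gibbs_eq`). -/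

open Finset

/-- The tangent-line bound behind Gibbs' inequality. -/
lemma sub_le_mul_log_sub {x y : ℝ} (hx : 0 < x) (hy : 0 < y) :
    x - y ≤ x * (Real.log x - Real.log y) := by
  have h := mul_le_mul_of_nonneg_left (Real.log_le_sub_one_of_pos (div_pos hy hx)) hx.le
  rw [Real.log_div hy.ne' hx.ne'] at h
  have : x * (y / x - 1) = y - x := by field_simp
  linarith

lemma sub_lt_mul_log_sub {x y : ℝ} (hx : 0 < x) (hy : 0 < y) (hxy : x ≠ y) :
    x - y < x * (Real.log x - Real.log y) := by
  have hne : y / x ≠ 1 := fun h => hxy ((div_eq_one_iff_eq hx.ne').1 h).symm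
  have h := mul_lt_mul_of_pos_left (Real.log_lt_sub_one_of_pos (div_pos hy hx) hne) hx
  rw [Real.log_div hy.ne' hx.ne'] at h
  have : x * (y / x - 1) = y - x := by field_simp
  linarith

lemma gibbs_nonneg {α : Type*} [Fintype α] {r s : α → ℝ} (hr : ∀ a, 0 < r a)
    (hs : ∀ a, 0 < s a) (hrs : ∑ a, r a = ∑ a, s a) :
    0 ≤ ∑ a, r a * (Real.log (r a) - Real.log (s a)) := by
  have h := Finset.sum_le_sum fun a (_ : a ∈ univ) => sub_le_mul_log_sub (hr a) (hs a)
  rw [Finset.sum_sub_distrib] at h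
  linarith

lemma gibbs_eq {α : Type*} [Fintype α] {r s : α → ℝ} (hr : ∀ a, 0 < r a)
    (hs : ∀ a, 0 < s a) (hrs : ∑ a, r a = ∑ a, s a)
    (h0 : ∑ a, r a * (Real.log (r a) - Real.log (s a)) = 0) : r = s := by
  by_contra hne
  obtain ⟨b, hb⟩ := Function.ne_iff.1 hne
  have h := Finset.sum_lt_sum (fun a (_ : a ∈ univ) => sub_le_mul_log_sub (hr a) (hs a))
    ⟨b, mem_univ b, sub_lt_mul_log_sub (hr b) (hs b) hb⟩
  rw [Finset.sum_sub_distrib] at h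
  linarith

lemma prod_update_eq {n : ℕ} {Z : Fin n → Type*} (i : Fin n) (q : ∀ j, Z j → ℝ) (r : Z i → ℝ) (z : ∀ j, Z j) :
    ∏ j, Function.update q i r j (z j) = r (z i) * ∏ j ∈ univ.erase i, q j (z j) := by
  rw [← Finset.mul_prod_erase univ _ (mem_univ i), Function.update_self]
  congr 1
  refine Finset.prod_congr rfl fun j hj => ?_
  rw [Function.update_of_ne (Finset.ne_of_mem_erase hj)]

section Product

variable {n : ℕ} {Z : Fin n → Type*} [∀ j, Fintype (Z j)] [∀ j, DecidableEq (Z j)]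

lemma sum_eq_sum_fiber (i : Fin n) (r : Z i → ℝ) (h : (∀ j, Z j) → ℝ) :
    ∑ z, r (z i) * h z = ∑ a, r a * ∑ z : ∀ j, Z j, if z i = a then h z else 0 := by
  simp_rw [Finset.mul_sum]
  rw [Finset.sum_comm]
  refine Finset.sum_congr rfl fun z _ => ?_
  simp

/-- A function that ignores the `i`-th coordinate has the same sum over every fibre of `z ↦ z i`:
overwriting that coordinate is a bijection between fibres. -/
lemma sum_fiber_eq (i : Fin n) (h : (∀ j, Z j) → ℝ)
    (hh : ∀ z a, h (Function.update z i a) = h z) (a b : Z i) :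
    (∑ z : ∀ j, Z j, if z i = a then h z else 0) =
      ∑ z : ∀ j, Z j, if z i = b then h z else 0 := by
  rw [← Finset.sum_filter, ← Finset.sum_filter]
  refine Finset.sum_nbij' (fun z => Function.update z i b) (fun z => Function.update z i a)
    ?_ ?_ ?_ ?_ ?_
  · intro z _; simp
  · intro z _; simp
  · intro z hz
    obtain rfl : z i = a := by simpa using hz
    simp
  · intro z hz
    obtain rfl : z i = b := by simpa using hz
    simp
  · intro z _; exact (hh z b).symm

/-- The fibre sum is a full product sum with the `i`-th factor replaced by an indicator, so it
factors as a product of the total masses. -/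
lemma sum_fiber_prod_eq_one (i : Fin n) (q : ∀ j, Z j → ℝ)
    (hq : ∀ j, j ≠ i → ∑ a, q j a = 1) (a : Z i) :
    (∑ z : ∀ j, Z j, if z i = a then ∏ j ∈ univ.erase i, q j (z j) else 0) = 1 := by
  have h1 : ∀ z : ∀ j, Z j, (if z i = a then ∏ j ∈ univ.erase i, q j (z j) else 0) =
      ∏ j, Function.update q i (fun b => if b = a then 1 else 0) j (z j) := fun z => by
    rw [prod_update_eq]; simp
  simp_rw [h1]
  rw [← Fintype.prod_sum]
  refine Finset.prod_eq_one fun j _ => ?_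
  by_cases hj : j = i
  · subst hj; simp
  · rw [Function.update_of_ne hj]; exact hq j hj

/-- The free energy as a function of the free factor alone; `H` is minus the entropy of the
fixed factors. -/
lemma exists_free_energy_eq [∀ j, Nonempty (Z j)] (p : (∀ j, Z j) → ℝ) (hp : ∀ z, 0 < p z)
    (i : Fin n) (q : ∀ j, Z j → ℝ) (hq_pos : ∀ j, j ≠ i → ∀ a, 0 < q j a)
    (hq_sum : ∀ j, j ≠ i → ∑ a, q j a = 1) :
    ∃ H : ℝ, ∀ r : Z i → ℝ, (∀ a, 0 < r a) →
      ∑ z : ∀ j, Z j, (∏ j, Function.update q i r j (z j)) *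
          Real.log ((∏ j, Function.update q i r j (z j)) / p z) =
        ∑ a, r a * (Real.log (r a) + H - ∑ z : ∀ j, Z j,
          if z i = a then (∏ j ∈ univ.erase i, q j (z j)) * Real.log (p z) else 0) := by
  set G : (∀ j, Z j) → ℝ := fun z => ∏ j ∈ univ.erase i, q j (z j) with hG
  have hGpos : ∀ z, 0 < G z := fun z =>
    Finset.prod_pos fun j hj => hq_pos j (Finset.ne_of_mem_erase hj) _
  have hGupd : ∀ z a, G (Function.update z i a) = G z := fun z a =>
    Finset.prod_congr rfl fun j hj => by
      rw [Function.update_of_ne (Finset.ne_of_mem_erase hj)]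
  obtain ⟨a₀⟩ := (inferInstance : Nonempty (Z i))
  refine ⟨∑ z : ∀ j, Z j, if z i = a₀ then G z * Real.log (G z) else 0, fun r hr => ?_⟩
  have hterm : ∀ z : ∀ j, Z j, (∏ j, Function.update q i r j (z j)) *
      Real.log ((∏ j, Function.update q i r j (z j)) / p z) =
      r (z i) * Real.log (r (z i)) * G z + r (z i) * (G z * Real.log (G z)) -
        r (z i) * (G z * Real.log (p z)) := fun z => by
    rw [prod_update_eq, Real.log_div (mul_pos (hr _) (hGpos z)).ne' (hp z).ne',
      Real.log_mul (hr _).ne' (hGpos z).ne']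
    simp only [hG]
    ring
  rw [Finset.sum_congr rfl fun z _ => hterm z, Finset.sum_sub_distrib, Finset.sum_add_distrib,
    sum_eq_sum_fiber i (fun a => r a * Real.log (r a)) G, sum_eq_sum_fiber i r,
    sum_eq_sum_fiber i r, ← Finset.sum_add_distrib, ← Finset.sum_sub_distrib]
  refine Finset.sum_congr rfl fun a _ => ?_
  rw [sum_fiber_prod_eq_one i q hq_sum a,
    sum_fiber_eq i (fun z => G z * Real.log (G z)) (fun z b => by simp only [hGupd]) a a₀]
  ring

end Product

/-- Mean-field coordinate update: fixing strictly positive pmfs `q j` for `j ≠ i`,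
the free energy `F r = ∑ z (∏ j q̃ j (z j)) * log ((∏ j q̃ j (z j)) / p z)`
(where `q̃ = Function.update q i r`) attains a unique minimizer among strictly
positive pmfs `r` on `Z i`, namely the softmax `qstar zᵢ = exp (m zᵢ) / ∑ exp (m ·)`
of the expected log-likelihood `m zᵢ = ∑_{z, z i = zᵢ} (∏_{j ≠ i} q j (z j)) * log (p z)`.
Equivalently, `log (qstar zᵢ) = c + m zᵢ` for a constant `c`. -/
theorem mean_field_coordinate_update
    {n : ℕ} (Z : Fin n → Type*) [∀ j, Fintype (Z j)] [∀ j, Nonempty (Z j)]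
    [∀ j, DecidableEq (Z j)]
    (p : (∀ j, Z j) → ℝ) (hp_pos : ∀ z, 0 < p z) (hp_sum : ∑ z, p z = 1)
    (i : Fin n) (q : ∀ j, Z j → ℝ)
    (hq_pos : ∀ j, j ≠ i → ∀ zj : Z j, 0 < q j zj)
    (hq_sum : ∀ j, j ≠ i → ∑ zj : Z j, q j zj = 1)
    (F : (Z i → ℝ) → ℝ)
    (hF : ∀ r : Z i → ℝ, F r =
      ∑ z : ∀ j, Z j, (∏ j, Function.update q i r j (z j)) *
        Real.log ((∏ j, Function.update q i r j (z j)) / p z))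
    (m : Z i → ℝ)
    (hm : ∀ zi : Z i, m zi =
      ∑ z : ∀ j, Z j,
        if z i = zi then (∏ j ∈ Finset.univ.erase i, q j (z j)) * Real.log (p z) else 0)
    (qstar : Z i → ℝ)
    (hqstar : ∀ zi : Z i, qstar zi = Real.exp (m zi) / ∑ zi' : Z i, Real.exp (m zi')) :
    ((∀ zi : Z i, 0 < qstar zi) ∧ ∑ zi : Z i, qstar zi = 1) ∧
    (∀ r : Z i → ℝ, (∀ zi : Z i, 0 < r zi) → (∑ zi : Z i, r zi = 1) → F qstar ≤ F r) ∧
    (∀ r : Z i → ℝ, (∀ zi : Z i, 0 < r zi) → (∑ zi : Z i, r zi = 1) →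
      F r = F qstar → r = qstar) ∧
    (∃ c : ℝ, ∀ zi : Z i, Real.log (qstar zi) = c + m zi) := by
  have hS : 0 < ∑ a, Real.exp (m a) :=
    Finset.sum_pos (fun a _ => Real.exp_pos _) Finset.univ_nonempty
  have hpos : ∀ a, 0 < qstar a := fun a => by
    rw [hqstar]; exact div_pos (Real.exp_pos _) hS
  have hsum : ∑ a, qstar a = 1 := by
    simp_rw [hqstar]
    rw [← Finset.sum_div, div_self hS.ne']
  have hlog : ∀ a, Real.log (qstar a) = -Real.log (∑ a, Real.exp (m a)) + m a := fun a => by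
    rw [hqstar, Real.log_div (Real.exp_pos _).ne' hS.ne', Real.log_exp]; ring
  obtain ⟨H, hH⟩ := exists_free_energy_eq p hp_pos i q hq_pos hq_sum
  have hKL : ∀ r : Z i → ℝ, (∀ a, 0 < r a) → ∑ a, r a = 1 →
      F r = ∑ a, r a * (Real.log (r a) - Real.log (qstar a)) +
        (H - Real.log (∑ a, Real.exp (m a))) := fun r hr hr1 => by
    rw [hF, hH r hr, ← one_mul (H - _), ← hr1, Finset.sum_mul, ← Finset.sum_add_distrib]
    refine Finset.sum_congr rfl fun a _ => ?_
    rw [hlog, ← hm]; ring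
  have hmin : F qstar = H - Real.log (∑ a, Real.exp (m a)) := by
    rw [hKL qstar hpos hsum]; simp
  refine ⟨⟨hpos, hsum⟩, fun r hr hr1 => ?_, fun r hr hr1 h => ?_, _, hlog⟩
  · rw [hmin, hKL r hr hr1]
    linarith [gibbs_nonneg hr hpos (hr1.trans hsum.symm)]
  · rw [hmin, hKL r hr hr1] at h
    exact gibbs_eq hr hpos (hr1.trans hsum.symm) (by linarith)
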